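/- Let $U$ be uniform on $(-\pi/2, \pi/2)$ and $W$ an independent exponential random variable with mean 1. For $\alpha \in (0,2]$, $\alpha \neq 1$, and $\beta = 0$, the random variable $X = \frac{\sin(\alpha U)}{(\cos U)^{1/\alpha}} \left[\frac{\cos(U - \alpha U)}{W}\right]^{(1-\alpha)/\alpha}$ has characteristic function $E[e^{i\theta X}] = \exp\{-|\theta|^{\alpha}\}$, i.e., $X \sim S_{\alpha}(1, 0, 0)$. -/

import Mathlib

open MeasureTheory ProbabilityTheory Filter Topology

/-- Characteristic function of a measure on ℝ. -/
noncomputable def cf (ν : Measure ℝ) (θ : ℝ) : ℂ :=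
  ∫ x, Complex.exp (Complex.I * θ * x) ∂ν

/-- The characteristic function of the stable law `S_α(σ, β, μ)` (for `α ≠ 1`). -/
noncomputable def stableCF (α σ β μ : ℝ) (θ : ℝ) : ℂ :=
  Complex.exp (((-(σ ^ α * |θ| ^ α) : ℝ) : ℂ) *
      (1 - Complex.I * (β : ℂ) * ((Real.sign θ : ℝ) : ℂ) *
        ((Real.tan (Real.pi * α / 2) : ℝ) : ℂ)) +
    Complex.I * (μ : ℂ) * (θ : ℂ))

/-- entire function `exp (-t^α + i t x)` in the logarithmic coordinate `t = exp z`. -/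
noncomputable def hh (α x : ℝ) (z : ℂ) : ℂ :=
  Complex.exp (-Complex.exp (α * z) + Complex.I * x * Complex.exp z)

/-- log-radius of the stationary-phase curve. -/
noncomputable def sc (α x u : ℝ) : ℝ :=
  (Real.log x + Real.log (Real.cos u) - Real.log (Real.sin (α * u))) / (α - 1)

/-- the (real) exponent along the curve. -/
noncomputable def VV (α x u : ℝ) : ℝ :=
  Real.exp (α * sc α x u) * Real.cos ((1 - α) * u) / Real.cos u

lemma hh_eq (α x s u : ℝ) : hh α x (s + u * Complex.I) =
    Complex.exp (((-(Real.exp (α * s) * Real.cos (α * u)) - x * Real.exp s * Real.sin u : ℝ) : ℂ) +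
      ((-(Real.exp (α * s) * Real.sin (α * u)) + x * Real.exp s * Real.cos u : ℝ) : ℂ)
        * Complex.I) := by
  unfold hh
  have h1 : Complex.exp (α * (s + u * Complex.I)) =
      (Real.exp (α * s) : ℂ) * (Real.cos (α * u) + Real.sin (α * u) * Complex.I) := by
    rw [mul_add, Complex.exp_add, ← mul_assoc, Complex.exp_mul_I]
    push_cast; ring
  have h2 : Complex.exp (s + u * Complex.I) =
      (Real.exp s : ℂ) * (Real.cos u + Real.sin u * Complex.I) := by
    rw [Complex.exp_add, Complex.exp_mul_I]
    push_cast; ring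
  rw [h1, h2]
  congr 1
  have hI := Complex.I_sq
  push_cast
  linear_combination (x * Complex.exp s * Complex.sin u) * hI

lemma hh_norm (α x s u : ℝ) : ‖hh α x (s + u * Complex.I)‖ =
    Real.exp (-(Real.exp (α * s) * Real.cos (α * u)) - x * Real.exp s * Real.sin u) := by
  rw [hh_eq, Complex.norm_exp]
  congr 1
  simp only [Complex.add_re, Complex.ofReal_re, Complex.mul_re, Complex.I_re, Complex.ofReal_im,
    Complex.I_im]
  ring

lemma hh_real_im (α x s : ℝ) : (hh α x s).im =
    Real.exp (-Real.exp (α * s)) * Real.sin (x * Real.exp s) := by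
  have := hh_eq α x s 0
  simp only [Complex.ofReal_zero, zero_mul, add_zero, mul_zero, Real.cos_zero, Real.sin_zero,
    mul_one] at this
  rw [this, Complex.exp_im]
  simp only [Complex.add_re, Complex.ofReal_re, Complex.mul_re, Complex.I_re, Complex.ofReal_im,
    Complex.I_im, Complex.add_im, Complex.mul_im]
  simp [-Complex.ofReal_exp]

lemma hh_diff (α x : ℝ) : Differentiable ℂ (hh α x) := by
  unfold hh; fun_prop

lemma trig_pos {α u : ℝ} (hα : 0 < α) (hα2 : α < 2) (h0 : 0 < u) (h1 : u < Real.pi / 2) :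
    0 < Real.cos u ∧ 0 < Real.sin (α * u) ∧ 0 < Real.cos ((1 - α) * u) := by
  refine ⟨Real.cos_pos_of_mem_Ioo ⟨by linarith, h1⟩, Real.sin_pos_of_pos_of_lt_pi (by positivity) ?_,
    Real.cos_pos_of_mem_Ioo ⟨?_, ?_⟩⟩ <;> nlinarith

lemma exp_sc {α x u : ℝ} (hα : 0 < α) (hα2 : α < 2) (hα1 : α ≠ 1) (hx : 0 < x)
    (h0 : 0 < u) (h1 : u < Real.pi / 2) :
    Real.exp (α * sc α x u) * Real.sin (α * u) = x * Real.exp (sc α x u) * Real.cos u := by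
  obtain ⟨hc, hs, _⟩ := trig_pos hα hα2 h0 h1
  have hne : α - 1 ≠ 0 := sub_ne_zero.2 hα1
  have : α * sc α x u = sc α x u + (Real.log x + Real.log (Real.cos u) - Real.log (Real.sin (α * u))) := by
    unfold sc; field_simp; ring
  rw [this, Real.exp_add, Real.exp_sub, Real.exp_add, Real.exp_log hx, Real.exp_log hc,
    Real.exp_log hs]
  field_simp

lemma hh_curve {α x u : ℝ} (hα : 0 < α) (hα2 : α < 2) (hα1 : α ≠ 1) (hx : 0 < x)
    (h0 : 0 < u) (h1 : u < Real.pi / 2) :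
    hh α x (sc α x u + u * Complex.I) = (Real.exp (-VV α x u) : ℝ) := by
  obtain ⟨hc, hs, _⟩ := trig_pos hα hα2 h0 h1
  have he := exp_sc hα hα2 hα1 hx h0 h1
  rw [hh_eq, he]
  have : -(Real.exp (α * sc α x u) * Real.cos (α * u)) - x * Real.exp (sc α x u) * Real.sin u
      = - VV α x u := by
    unfold VV
    rw [show (1 - α) * u = u - α * u by ring, Real.cos_sub]
    field_simp
    linear_combination Real.sin u * he
  rw [this]
  simp

lemma sc_deriv {α x u : ℝ} (hα : 0 < α) (hα2 : α < 2)
    (h0 : 0 < u) (h1 : u < Real.pi / 2) : DifferentiableAt ℝ (sc α x) u := by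
  obtain ⟨hc, hs, _⟩ := trig_pos hα hα2 h0 h1
  unfold sc
  have h2 : DifferentiableAt ℝ (fun u => Real.log (Real.cos u)) u :=
    (Real.differentiableAt_cos).log hc.ne'
  have h3 : DifferentiableAt ℝ (fun u => Real.log (Real.sin (α * u))) u :=
    (DifferentiableAt.sin (by fun_prop)).log hs.ne'
  fun_prop

lemma VV_cont {α x u : ℝ} (hα : 0 < α) (hα2 : α < 2)
    (h0 : 0 < u) (h1 : u < Real.pi / 2) : ContinuousAt (VV α x) u := by
  obtain ⟨hc, hs, _⟩ := trig_pos hα hα2 h0 h1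
  have := (sc_deriv (x := x) hα hα2 h0 h1).continuousAt
  unfold VV
  apply ContinuousAt.div _ (by fun_prop) hc.ne'
  apply ContinuousAt.mul _ (by fun_prop)
  exact Real.continuous_exp.continuousAt.comp (this.const_mul α)

lemma curve_id {α x u1 u2 : ℝ} (hα : 0 < α) (hα2 : α < 2) (hα1 : α ≠ 1) (hx : 0 < x)
    (h0 : 0 < u1) (h12 : u1 ≤ u2) (h1 : u2 < Real.pi / 2) :
    ∫ u in u1..u2, Real.exp (-VV α x u) =
      (∫ v in (0:ℝ)..u2, (hh α x (sc α x u2 + v * Complex.I)).re) -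
      (∫ v in (0:ℝ)..u1, (hh α x (sc α x u1 + v * Complex.I)).re) +
      ∫ y in (sc α x u1)..(sc α x u2), (hh α x y).im := by
  have hcont : ContinuousOn (sc α x) (Set.Icc u1 u2) := fun u hu =>
    (sc_deriv hα hα2 (h0.trans_le hu.1) (hu.2.trans_lt h1)).continuousAt.continuousWithinAt
  obtain ⟨M, hM⟩ := isCompact_Icc.exists_bound_of_continuousOn hcont
  have hpi := Real.pi_le_four
  obtain ⟨H, hH⟩ := (hh_diff α x).differentiableOn.isExactOn_ball (c := 0) (r := M + 3)
  have hmem : ∀ s u : ℝ, |s| ≤ M → 0 ≤ u → u ≤ u2 → (s + u * Complex.I : ℂ) ∈ Metric.ball (0:ℂ) (M+3) := by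
    intro s u hs hu hu'
    rw [mem_ball_zero_iff]
    calc ‖(s + u * Complex.I : ℂ)‖ ≤ ‖(s:ℂ)‖ + ‖(u * Complex.I : ℂ)‖ := norm_add_le _ _
      _ = |s| + |u| := by simp
      _ < M + 3 := by rw [abs_of_nonneg hu]; linarith
  have hM1 := hM u1 ⟨le_rfl, h12⟩
  have hM2 := hM u2 ⟨h12, le_rfl⟩
  rw [Real.norm_eq_abs] at hM1 hM2
  have hcomp : Continuous (hh α x) := (hh_diff α x).continuous
  -- vertical segments
  have hvert : ∀ s u : ℝ, |s| ≤ M → 0 ≤ u → u ≤ u2 →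
      ∫ v in (0:ℝ)..u, (hh α x (s + v * Complex.I)).re =
        (H (s + u * Complex.I)).im - (H s).im := by
    intro s u hs hu hu'
    have := intervalIntegral.integral_eq_sub_of_hasDerivAt
      (f := fun v : ℝ => (H (s + v * Complex.I)).im)
      (f' := fun v : ℝ => (hh α x (s + v * Complex.I)).re) (a := 0) (b := u) ?_ ?_
    · rw [this]; simp
    · intro v hv
      rw [Set.uIcc_of_le hu] at hv
      have h := hH _ (hmem s v hs hv.1 (hv.2.trans hu'))
      have hz : HasDerivAt (fun v : ℝ => (s + v * Complex.I : ℂ)) Complex.I v := by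
        simpa using (((hasDerivAt_id v).ofReal_comp).mul_const Complex.I).const_add (s:ℂ)
      have h2 := HasDerivAt.scomp v h hz
      have h3 := Complex.imCLM.hasFDerivAt.comp_hasDerivAt v h2
      simpa [Function.comp_def] using h3
    · apply Continuous.intervalIntegrable
      fun_prop
  have hhor : ∫ y in (sc α x u1)..(sc α x u2), (hh α x y).im =
      (H (sc α x u2)).im - (H (sc α x u1)).im := by
    have := intervalIntegral.integral_eq_sub_of_hasDerivAt
      (f := fun v : ℝ => (H v).im)
      (f' := fun v : ℝ => (hh α x v).im) (a := sc α x u1) (b := sc α x u2) ?_ ?_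
    · rw [this]
    · intro v hv
      have hv' : |v| ≤ M := by
        have : Set.uIcc (sc α x u1) (sc α x u2) ⊆ Set.Icc (-M) M :=
          Set.uIcc_subset_Icc (abs_le.1 hM1) (abs_le.1 hM2)
        exact abs_le.2 (this hv)
      have h := hH (v:ℂ) (by simpa using hmem v 0 hv' le_rfl (by linarith))
      have h2 := HasDerivAt.scomp v h (hasDerivAt_id v).ofReal_comp
      have h3 := Complex.imCLM.hasFDerivAt.comp_hasDerivAt v h2
      simpa [Function.comp_def] using h3
    · apply Continuous.intervalIntegrable
      fun_prop
  have hcur : ∫ u in u1..u2, Real.exp (-VV α x u) =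
      (H (sc α x u2 + u2 * Complex.I)).im - (H (sc α x u1 + u1 * Complex.I)).im := by
    have := intervalIntegral.integral_eq_sub_of_hasDerivAt
      (f := fun v : ℝ => (H (sc α x v + v * Complex.I)).im)
      (f' := fun v : ℝ => Real.exp (-VV α x v)) (a := u1) (b := u2) ?_ ?_
    · rw [this]
    · intro v hv
      rw [Set.uIcc_of_le h12] at hv
      have hv0 := h0.trans_le hv.1
      have hv1 := hv.2.trans_lt h1
      have h := hH _ (hmem _ v (hM v hv) hv0.le hv.2)
      have hz : HasDerivAt (fun v : ℝ => (sc α x v + v * Complex.I : ℂ))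
          (((deriv (sc α x) v : ℝ) : ℂ) + Complex.I) v := by
        have := ((sc_deriv (x := x) hα hα2 hv0 hv1).hasDerivAt.ofReal_comp).fun_add
          (((hasDerivAt_id v).ofReal_comp).mul_const Complex.I)
        simpa using this
      have h2 := HasDerivAt.scomp v h hz
      have h3 := Complex.imCLM.hasFDerivAt.comp_hasDerivAt v h2
      rw [hh_curve hα hα2 hα1 hx hv0 hv1] at h3
      refine h3.congr_deriv ?_
      simp [-Complex.ofReal_exp, -Complex.ofReal_neg, Complex.mul_im]
    · apply ContinuousOn.intervalIntegrable
      intro v hv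
      rw [Set.uIcc_of_le h12] at hv
      have := VV_cont (x := x) hα hα2 (h0.trans_le hv.1) (hv.2.trans_lt h1)
      exact (Real.continuous_exp.continuousAt.comp this.neg).continuousWithinAt
  rw [hcur, hvert _ u2 hM2 (by linarith) le_rfl, hvert _ u1 hM1 h0.le h12, hhor]
  ring
/-- the Gil-Pelaez integral in logarithmic coordinates -/
noncomputable def TT (α x : ℝ) : ℝ :=
  ∫ y : ℝ, Real.exp (-Real.exp (α * y)) * Real.sin (x * Real.exp y)

lemma int_base {α : ℝ} (hα : 0 < α) :
    Integrable (fun y : ℝ => Real.exp y * Real.exp (-Real.exp (α * y))) := by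
  have h := integrableOn_rpow_mul_exp_neg_rpow (p := α) (s := 0) (by norm_num) hα
  have h2 := (integrableOn_image_iff_integrableOn_abs_deriv_smul (s := Set.univ)
    (f := Real.exp) (f' := Real.exp) MeasurableSet.univ
    (fun x _ => (Real.hasDerivAt_exp x).hasDerivWithinAt) Real.exp_injective.injOn
    (fun x : ℝ => x ^ (0:ℝ) * Real.exp (-x ^ α)))
  rw [Set.image_univ, Real.range_exp] at h2
  have h3 := h2.1 h
  rw [integrableOn_univ] at h3
  refine h3.congr (Eventually.of_forall fun y => ?_)
  simp only [abs_of_pos (Real.exp_pos y), Real.rpow_zero, one_mul, smul_eq_mul]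
  rw [← Real.exp_mul, mul_comm y α]

lemma int_T {α : ℝ} (hα : 0 < α) (x : ℝ) :
    Integrable (fun y : ℝ => Real.exp (-Real.exp (α * y)) * Real.sin (x * Real.exp y)) := by
  refine ((int_base hα).const_mul |x|).mono' (by fun_prop) (Eventually.of_forall fun y => ?_)
  rw [norm_mul, Real.norm_eq_abs, Real.norm_eq_abs, abs_of_pos (Real.exp_pos _)]
  have : |Real.sin (x * Real.exp y)| ≤ |x| * Real.exp y := by
    refine Real.abs_sin_le_abs.trans ?_
    rw [abs_mul, abs_of_pos (Real.exp_pos y)]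
  nlinarith [Real.exp_pos (-Real.exp (α * y))]

lemma sc_lim0 {α : ℝ} (hα : 0 < α) (x : ℝ) :
    Tendsto (fun δ : ℝ => Real.log x + Real.log (Real.cos δ) - Real.log (Real.sin (α * δ)))
      (𝓝[>] 0) atTop := by
  have h1 : Tendsto (fun δ : ℝ => Real.log x + Real.log (Real.cos δ)) (𝓝[>] 0) (𝓝 (Real.log x + Real.log (Real.cos 0))) := by
    have : ContinuousAt (fun δ : ℝ => Real.log x + Real.log (Real.cos δ)) 0 := by
      apply ContinuousAt.add continuousAt_const
      exact ContinuousAt.log (by fun_prop) (by simp)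
    exact this.tendsto.mono_left nhdsWithin_le_nhds
  have h2 : Tendsto (fun δ : ℝ => Real.sin (α * δ)) (𝓝[>] 0) (𝓝[>] 0) := by
    apply tendsto_nhdsWithin_iff.2 ⟨?_, ?_⟩
    · have : ContinuousAt (fun δ : ℝ => Real.sin (α * δ)) 0 := by fun_prop
      simpa [ContinuousAt] using this.tendsto.mono_left (nhdsWithin_le_nhds (s := Set.Ioi 0))
    · have : Set.Ioo (0:ℝ) (Real.pi / α) ∈ 𝓝[>] (0:ℝ) := Ioo_mem_nhdsGT (by positivity)
      filter_upwards [this] with δ hδ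
      apply Real.sin_pos_of_pos_of_lt_pi (mul_pos hα hδ.1)
      have := hδ.2
      rw [lt_div_iff₀ hα] at this
      linarith
  have h3 := Real.tendsto_log_nhdsGT_zero.comp h2
  exact h1.add_atTop (tendsto_neg_atBot_atTop.comp h3)

lemma sc_lim1 {α : ℝ} (hα : 0 < α) (hα2 : α < 2) (x : ℝ) :
    Tendsto (fun δ : ℝ => Real.log x + Real.log (Real.cos (Real.pi / 2 - δ)) -
      Real.log (Real.sin (α * (Real.pi / 2 - δ))))
      (𝓝[>] 0) atBot := by
  have hs : 0 < Real.sin (α * (Real.pi / 2)) :=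
    Real.sin_pos_of_pos_of_lt_pi (by positivity) (by nlinarith [Real.pi_pos])
  have h1 : Tendsto (fun δ : ℝ => Real.log x - Real.log (Real.sin (α * (Real.pi / 2 - δ)))) (𝓝[>] 0)
      (𝓝 (Real.log x - Real.log (Real.sin (α * (Real.pi / 2 - 0))))) := by
    have : ContinuousAt (fun δ : ℝ => Real.log x - Real.log (Real.sin (α * (Real.pi / 2 - δ)))) 0 := by
      apply ContinuousAt.sub continuousAt_const
      exact ContinuousAt.log (by fun_prop) (by simpa using hs.ne')
    exact this.tendsto.mono_left nhdsWithin_le_nhds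
  have h2 : Tendsto (fun δ : ℝ => Real.cos (Real.pi / 2 - δ)) (𝓝[>] 0) (𝓝[>] 0) := by
    simp_rw [Real.cos_pi_div_two_sub]
    apply tendsto_nhdsWithin_iff.2 ⟨?_, ?_⟩
    · have : ContinuousAt (fun δ : ℝ => Real.sin δ) 0 := by fun_prop
      simpa [ContinuousAt] using this.tendsto.mono_left (nhdsWithin_le_nhds (s := Set.Ioi 0))
    · have : Set.Ioo (0:ℝ) (Real.pi) ∈ 𝓝[>] (0:ℝ) := Ioo_mem_nhdsGT (by positivity)
      filter_upwards [this] with δ hδ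
      exact Real.sin_pos_of_pos_of_lt_pi hδ.1 hδ.2
  have h3 := Real.tendsto_log_nhdsGT_zero.comp h2
  refine (h1.add_atBot h3).congr fun δ => ?_
  simp only [Function.comp]
  ring

lemma VV_pos {α x u : ℝ} (hα : 0 < α) (hα2 : α < 2)
    (h0 : 0 < u) (h1 : u < Real.pi / 2) : 0 < VV α x u := by
  obtain ⟨hc, hs, h3⟩ := trig_pos hα hα2 h0 h1
  unfold VV
  positivity

lemma eV_int {α x : ℝ} (hα : 0 < α) (hα2 : α < 2) :
    IntegrableOn (fun u => Real.exp (-VV α x u)) (Set.Ioo 0 (Real.pi / 2)) := by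
  have hm : AEStronglyMeasurable (fun u => Real.exp (-VV α x u))
      (volume.restrict (Set.Ioo 0 (Real.pi / 2))) := by
    apply ContinuousOn.aestronglyMeasurable _ measurableSet_Ioo
    intro v hv
    have := VV_cont (x := x) hα hα2 hv.1 hv.2
    exact (Real.continuous_exp.continuousAt.comp this.neg).continuousWithinAt
  refine (integrable_const (1:ℝ)).mono' hm ?_
  filter_upwards [ae_restrict_mem measurableSet_Ioo] with u hu
  rw [Real.norm_eq_abs, Real.abs_exp, Real.exp_le_one_iff]
  linarith [VV_pos (x := x) hα hα2 hu.1 hu.2]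

lemma limA {α x : ℝ} (hα : 0 < α) (hα2 : α < 2) :
    Tendsto (fun δ : ℝ => ∫ u in δ..(Real.pi / 2 - δ), Real.exp (-VV α x u)) (𝓝[>] 0)
      (𝓝 (∫ u in Set.Ioo 0 (Real.pi / 2), Real.exp (-VV α x u))) := by
  have hδ : Tendsto (fun δ : ℝ => δ) (𝓝[>] 0) (𝓝 0) := tendsto_id.mono_left nhdsWithin_le_nhds
  have hδ2 : Tendsto (fun δ : ℝ => Real.pi / 2 - δ) (𝓝[>] 0) (𝓝 (Real.pi / 2)) := by
    simpa using hδ.const_sub (Real.pi / 2)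
  have hc := aecover_Ioo_of_Ioc (μ := volume) hδ hδ2
  refine (hc.integral_tendsto_of_countably_generated (eV_int (x := x) hα hα2)).congr' ?_
  have : Set.Ioo (0:ℝ) (Real.pi / 4) ∈ 𝓝[>] (0:ℝ) := Ioo_mem_nhdsGT (by positivity)
  filter_upwards [this] with δ hδ
  rw [intervalIntegral.integral_of_le (by linarith [hδ.2]), Measure.restrict_restrict measurableSet_Ioc]
  congr 2
  refine Set.inter_eq_left.2 fun u hu => ⟨hδ.1.trans hu.1, ?_⟩
  linarith [hu.2, hδ.1]

lemma limB {α x : ℝ} (hα : 0 < α) (hx : 0 < x) :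
    Tendsto (fun δ : ℝ => ∫ v in (0:ℝ)..δ, (hh α x (sc α x δ + v * Complex.I)).re) (𝓝[>] 0)
      (𝓝 0) := by
  have hδ : Tendsto (fun δ : ℝ => δ) (𝓝[>] 0) (𝓝 0) := tendsto_id.mono_left nhdsWithin_le_nhds
  refine squeeze_zero_norm' ?_ hδ
  have : Set.Ioo (0:ℝ) (min (Real.pi / 2 / α) Real.pi) ∈ 𝓝[>] (0:ℝ) :=
    Ioo_mem_nhdsGT (lt_min (by positivity) (by positivity))
  filter_upwards [this] with δ hδ
  have h := intervalIntegral.norm_integral_le_of_norm_le_const (a := 0) (b := δ) (C := 1)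
    (f := fun v : ℝ => (hh α x (sc α x δ + v * Complex.I)).re) ?_
  · simpa [abs_of_pos hδ.1] using h
  · intro v hv
    rw [Set.uIoc_of_le hδ.1.le] at hv
    refine (Complex.abs_re_le_norm _).trans ?_
    rw [hh_norm, Real.exp_le_one_iff]
    have h1 : v < Real.pi / 2 / α := hv.2.trans_lt (hδ.2.trans_le (min_le_left _ _))
    have h2 : v < Real.pi := hv.2.trans_lt (hδ.2.trans_le (min_le_right _ _))
    rw [lt_div_iff₀ hα] at h1
    have h3 : 0 < Real.cos (α * v) := Real.cos_pos_of_mem_Ioo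
      ⟨by nlinarith [Real.pi_pos, mul_pos hα hv.1], by linarith⟩
    have h4 : 0 < Real.sin v := Real.sin_pos_of_pos_of_lt_pi hv.1 h2
    have := mul_pos (Real.exp_pos (α * sc α x δ)) h3
    have := mul_pos (mul_pos hx (Real.exp_pos (sc α x δ))) h4
    linarith

lemma limC_lt {α x : ℝ} (hα : 0 < α) (hα1 : α < 1) (hx : 0 < x) :
    Tendsto (fun δ : ℝ => ∫ v in (0:ℝ)..(Real.pi / 2 - δ),
      (hh α x (sc α x (Real.pi / 2 - δ) + v * Complex.I)).re) (𝓝[>] 0) (𝓝 0) := by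
  have hs : Tendsto (fun δ : ℝ => sc α x (Real.pi / 2 - δ)) (𝓝[>] 0) atTop := by
    unfold sc
    simp_rw [div_eq_mul_inv _ (α - 1)]
    exact (sc_lim1 hα (by linarith) x).atBot_mul_const_of_neg (inv_lt_zero.2 (by linarith))
  have hc : 0 < Real.cos (α * (Real.pi / 2)) := Real.cos_pos_of_mem_Ioo
    ⟨by nlinarith [Real.pi_pos], by nlinarith [Real.pi_pos]⟩
  have hb : Tendsto (fun δ : ℝ => Real.exp (-(Real.exp (α * sc α x (Real.pi / 2 - δ)) *
      Real.cos (α * (Real.pi / 2)))) * (Real.pi / 2)) (𝓝[>] 0) (𝓝 (0 * (Real.pi / 2))) := by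
    apply Tendsto.mul_const
    apply Real.tendsto_exp_neg_atTop_nhds_zero.comp
    exact (Real.tendsto_exp_atTop.comp (hs.const_mul_atTop hα)).atTop_mul_const hc
  rw [zero_mul] at hb
  refine squeeze_zero_norm' ?_ hb
  have : Set.Ioo (0:ℝ) (Real.pi / 2) ∈ 𝓝[>] (0:ℝ) := Ioo_mem_nhdsGT (by positivity)
  filter_upwards [this] with δ hδ
  have h := intervalIntegral.norm_integral_le_of_norm_le_const (a := 0) (b := Real.pi / 2 - δ)
    (C := Real.exp (-(Real.exp (α * sc α x (Real.pi / 2 - δ)) * Real.cos (α * (Real.pi / 2)))))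
    (f := fun v : ℝ => (hh α x (sc α x (Real.pi / 2 - δ) + v * Complex.I)).re) ?_
  · refine h.trans ?_
    gcongr
    rw [sub_zero, abs_of_pos (by linarith [hδ.2])]
    linarith [hδ.1]
  · intro v hv
    rw [Set.uIoc_of_le (by linarith [hδ.2])] at hv
    refine (Complex.abs_re_le_norm _).trans ?_
    rw [hh_norm]
    apply Real.exp_le_exp.2
    have h4 : 0 < Real.sin v := Real.sin_pos_of_pos_of_lt_pi hv.1 (by linarith [hv.2, hδ.1, Real.pi_pos])
    have h5 : Real.cos (α * (Real.pi / 2)) ≤ Real.cos (α * v) := by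
      apply Real.cos_le_cos_of_nonneg_of_le_pi
      · exact (mul_pos hα hv.1).le
      · nlinarith [Real.pi_pos]
      · apply mul_le_mul_of_nonneg_left _ hα.le
        linarith [hv.2, hδ.1]
    have := mul_le_mul_of_nonneg_left h5 (Real.exp_pos (α * sc α x (Real.pi / 2 - δ))).le
    have := mul_pos (mul_pos hx (Real.exp_pos (sc α x (Real.pi / 2 - δ)))) h4
    linarith

lemma limC_gt {α x : ℝ} (hα1 : 1 < α) (hα2 : α < 2) (hx : 0 < x) :
    Tendsto (fun δ : ℝ => ∫ v in (0:ℝ)..(Real.pi / 2 - δ),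
      (hh α x (sc α x (Real.pi / 2 - δ) + v * Complex.I)).re) (𝓝[>] 0) (𝓝 (Real.pi / 2)) := by
  have hα : 0 < α := by linarith
  have hs : Tendsto (fun δ : ℝ => sc α x (Real.pi / 2 - δ)) (𝓝[>] 0) atBot := by
    unfold sc
    exact (sc_lim1 hα (by linarith) x).atBot_div_const (by linarith)
  have hw : Tendsto (fun δ : ℝ => (Real.exp (α * sc α x (Real.pi / 2 - δ)) +
      x * Real.exp (sc α x (Real.pi / 2 - δ)))) (𝓝[>] 0) (𝓝 0) := by
    have h1 := Real.tendsto_exp_atBot.comp (hs.const_mul_atBot hα)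
    have h2 := (Real.tendsto_exp_atBot.comp hs).const_mul x
    simpa using h1.add h2
  have hδ0 : Tendsto (fun δ : ℝ => δ) (𝓝[>] 0) (𝓝 0) := tendsto_id.mono_left nhdsWithin_le_nhds
  have hb : Tendsto (fun δ : ℝ => 2 * (Real.exp (α * sc α x (Real.pi / 2 - δ)) +
      x * Real.exp (sc α x (Real.pi / 2 - δ))) * (Real.pi / 2) + δ) (𝓝[>] 0) (𝓝 0) := by
    have := ((hw.const_mul 2).mul_const (Real.pi / 2)).add hδ0
    simpa using this
  rw [tendsto_iff_norm_sub_tendsto_zero]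
  refine squeeze_zero' (Eventually.of_forall fun _ => norm_nonneg _) ?_ hb
  have : Set.Ioo (0:ℝ) (Real.pi / 2) ∈ 𝓝[>] (0:ℝ) := Ioo_mem_nhdsGT (by positivity)
  filter_upwards [this, hw.eventually (gt_mem_nhds one_pos)] with δ hδ hw1
  set s := sc α x (Real.pi / 2 - δ)
  have hcont : Continuous (hh α x) := (hh_diff α x).continuous
  have h := intervalIntegral.norm_integral_le_of_norm_le_const (a := 0) (b := Real.pi / 2 - δ)
    (C := 2 * (Real.exp (α * s) + x * Real.exp s))
    (f := fun v : ℝ => (hh α x (s + v * Complex.I)).re - 1) ?_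
  · rw [intervalIntegral.integral_sub (Continuous.intervalIntegrable (by fun_prop) _ _) (by simp)] at h
    simp only [intervalIntegral.integral_const, sub_zero, smul_eq_mul, mul_one] at h
    rw [abs_of_pos (by linarith [hδ.2] : 0 < Real.pi / 2 - δ), Real.norm_eq_abs] at h
    have h2 : 2 * (Real.exp (α * s) + x * Real.exp s) * (Real.pi / 2 - δ) ≤
        2 * (Real.exp (α * s) + x * Real.exp s) * (Real.pi / 2) := by
      gcongr
      linarith [hδ.1]
    rw [Real.norm_eq_abs, abs_le]
    rw [abs_le] at h
    constructor <;> linarith [h.1, h.2, hδ.1]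
  · intro v hv
    have hn : ‖(-Complex.exp (α * (s + v * Complex.I)) + Complex.I * x * Complex.exp (s + v * Complex.I))‖
        ≤ Real.exp (α * s) + x * Real.exp s := by
      refine (norm_add_le _ _).trans ?_
      rw [norm_neg, norm_mul, norm_mul, Complex.norm_exp, Complex.norm_exp]
      simp [abs_of_pos hx]
    have := Complex.norm_exp_sub_one_le (hn.trans hw1.le)
    have h3 : (hh α x (s + v * Complex.I)).re - 1 = (hh α x (s + v * Complex.I) - 1).re := by simp
    rw [h3]
    refine (Complex.abs_re_le_norm _).trans (this.trans ?_)
    linarith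

lemma key_lt {α x : ℝ} (hα : 0 < α) (hα1 : α < 1) (hx : 0 < x) :
    ∫ u in Set.Ioo 0 (Real.pi / 2), Real.exp (-VV α x u) = TT α x := by
  have hs1 : Tendsto (fun δ : ℝ => sc α x δ) (𝓝[>] 0) atBot := by
    unfold sc
    exact (sc_lim0 hα x).atTop_div_const_of_neg (by linarith)
  have hs2 : Tendsto (fun δ : ℝ => sc α x (Real.pi / 2 - δ)) (𝓝[>] 0) atTop := by
    unfold sc
    simp_rw [div_eq_mul_inv _ (α - 1)]
    exact (sc_lim1 hα (by linarith) x).atBot_mul_const_of_neg (inv_lt_zero.2 (by linarith))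
  have hD := intervalIntegral_tendsto_integral (int_T hα x) hs1 hs2
  have hall := ((limC_lt hα hα1 hx).sub (limB hα hx)).add hD
  rw [sub_zero, zero_add] at hall
  refine tendsto_nhds_unique (limA (x := x) hα (by linarith)) (hall.congr' ?_)
  have : Set.Ioo (0:ℝ) (Real.pi / 4) ∈ 𝓝[>] (0:ℝ) := Ioo_mem_nhdsGT (by positivity)
  filter_upwards [this] with δ hδ
  rw [curve_id hα (by linarith) hα1.ne hx hδ.1 (by linarith [hδ.2]) (by linarith [hδ.1])]
  simp_rw [hh_real_im]

lemma key_gt {α x : ℝ} (hα1 : 1 < α) (hα2 : α < 2) (hx : 0 < x) :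
    ∫ u in Set.Ioo 0 (Real.pi / 2), Real.exp (-VV α x u) = Real.pi / 2 - TT α x := by
  have hα : 0 < α := by linarith
  have hs1 : Tendsto (fun δ : ℝ => sc α x δ) (𝓝[>] 0) atTop := by
    unfold sc
    exact (sc_lim0 hα x).atTop_div_const (by linarith)
  have hs2 : Tendsto (fun δ : ℝ => sc α x (Real.pi / 2 - δ)) (𝓝[>] 0) atBot := by
    unfold sc
    exact (sc_lim1 hα (by linarith) x).atBot_div_const (by linarith)
  have hD := intervalIntegral_tendsto_integral (int_T hα x) hs2 hs1
  have hall := ((limC_gt hα1 hα2 hx).sub (limB hα hx)).sub hD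
  rw [sub_zero] at hall
  refine tendsto_nhds_unique (limA (x := x) hα (by linarith)) (hall.congr' ?_)
  have : Set.Ioo (0:ℝ) (Real.pi / 4) ∈ 𝓝[>] (0:ℝ) := Ioo_mem_nhdsGT (by positivity)
  filter_upwards [this] with δ hδ
  rw [curve_id hα (by linarith) hα1.ne' hx hδ.1 (by linarith [hδ.2]) (by linarith [hδ.1])]
  rw [intervalIntegral.integral_symm (sc α x δ)]
  simp_rw [hh_real_im]
  ring
/-- `π` times the density. -/
noncomputable def ff (α x : ℝ) : ℝ :=
  ∫ y : ℝ, Real.exp (-Real.exp (α * y)) * (Real.cos (x * Real.exp y) * Real.exp y)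

lemma TT_deriv {α : ℝ} (hα : 0 < α) (x : ℝ) : HasDerivAt (TT α) (ff α x) x := by
  unfold TT ff
  refine (hasDerivAt_integral_of_dominated_loc_of_deriv_le (s := Set.univ)
    (F := fun x y => Real.exp (-Real.exp (α * y)) * Real.sin (x * Real.exp y))
    (F' := fun x y => Real.exp (-Real.exp (α * y)) * (Real.cos (x * Real.exp y) * Real.exp y))
    (bound := fun y => Real.exp y * Real.exp (-Real.exp (α * y))) univ_mem
    (Eventually.of_forall fun x => by fun_prop) (int_T hα x) (by fun_prop)
    (Eventually.of_forall fun y x _ => ?_) (int_base hα)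
    (Eventually.of_forall fun y x _ => ?_)).2
  · rw [norm_mul, norm_mul, Real.norm_eq_abs, Real.norm_eq_abs, Real.norm_eq_abs,
      abs_of_pos (Real.exp_pos _), abs_of_pos (Real.exp_pos _), mul_comm]
    gcongr
    have := Real.abs_cos_le_one (x * Real.exp y)
    nlinarith [Real.exp_pos y]
  · have h1 : HasDerivAt (fun x => x * Real.exp y) (Real.exp y) x := by
      simpa using (hasDerivAt_id x).mul_const (Real.exp y)
    exact h1.sin.const_mul _

lemma TT_zero (α : ℝ) : TT α 0 = 0 := by simp [TT]

lemma ff_neg (α x : ℝ) : ff α (-x) = ff α x := by simp [ff]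

lemma ff_abs (α x : ℝ) : ff α |x| = ff α x := by
  rcases abs_choice x with h | h <;> rw [h]
  exact ff_neg α x

lemma ff_eq (α x : ℝ) :
    ff α x = ∫ t in Set.Ioi (0:ℝ), Real.exp (-t ^ α) * Real.cos (x * t) := by
  have h2 := (integral_image_eq_integral_abs_deriv_smul (s := Set.univ)
    (f := Real.exp) (f' := Real.exp) MeasurableSet.univ
    (fun x _ => (Real.hasDerivAt_exp x).hasDerivWithinAt) Real.exp_injective.injOn
    (fun t : ℝ => Real.exp (-t ^ α) * Real.cos (x * t)))
  rw [Set.image_univ, Real.range_exp] at h2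
  rw [h2, setIntegral_univ]
  unfold ff
  congr 1
  ext y
  rw [abs_of_pos (Real.exp_pos y), ← Real.exp_mul, mul_comm y α, smul_eq_mul]
  ring

lemma integrable_of_even {f : ℝ → ℝ} (hf : ∀ x, f (-x) = f x)
    (hi : IntegrableOn f (Set.Ioi 0)) : Integrable f := by
  rw [← integrableOn_univ, ← Set.Iic_union_Ioi (a := (0:ℝ)), integrableOn_union]
  refine ⟨?_, hi⟩
  have := (integrableOn_Ici_iff_integrableOn_Ioi (f := f) (b := (0:ℝ)) (μ := volume)).2 hi
  have h2 := ((Measure.measurePreserving_neg (volume : Measure ℝ)).integrableOn_comp_preimage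
    (Homeomorph.neg ℝ).measurableEmbedding (f := f) (s := Set.Ici 0)).2 this
  simpa [Function.comp_def, hf] using h2

lemma g_int {α : ℝ} (hα : 0 < α) : Integrable (fun t : ℝ => Real.exp (-|t| ^ α)) := by
  apply integrable_of_even (by simp)
  refine (integrableOn_rpow_mul_exp_neg_rpow (p := α) (s := 0) (by norm_num) hα).congr_fun ?_
    measurableSet_Ioi
  intro t ht
  simp only [Real.rpow_zero, one_mul]
  rw [abs_of_pos ht]

lemma g_cont {α : ℝ} (hα : 0 < α) : Continuous (fun t : ℝ => Real.exp (-|t| ^ α)) := by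
  have : Continuous (fun t : ℝ => |t| ^ α) := (Real.continuous_rpow_const hα.le).comp continuous_abs
  fun_prop

open FourierTransform in
lemma four_eq {α : ℝ} (hα : 0 < α) (ξ : ℝ) :
    𝓕 (fun t : ℝ => ((Real.exp (-|t| ^ α) : ℝ) : ℂ)) ξ = ((2 * ff α (2 * Real.pi * ξ) : ℝ) : ℂ) := by
  rw [Real.fourier_real_eq_integral_exp_smul]
  have hi : Integrable (fun t : ℝ => Complex.exp (((-2 * Real.pi * t * ξ : ℝ) : ℂ) * Complex.I) •
      ((Real.exp (-|t| ^ α) : ℝ) : ℂ)) := by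
    refine (g_int hα).mono' ?_ (Eventually.of_forall fun t => ?_)
    · have := g_cont hα
      apply Continuous.aestronglyMeasurable
      fun_prop
    · rw [norm_smul, Complex.norm_exp_ofReal_mul_I, one_mul, Complex.norm_real, Real.norm_eq_abs,
        Real.abs_exp]
  have hre : ∀ t : ℝ, (Complex.exp (((-2 * Real.pi * t * ξ : ℝ) : ℂ) * Complex.I) •
      ((Real.exp (-|t| ^ α) : ℝ) : ℂ)).re = Real.exp (-|t| ^ α) * Real.cos (2 * Real.pi * ξ * t) := by
    intro t
    rw [smul_eq_mul, Complex.re_mul_ofReal, Complex.exp_ofReal_mul_I_re, mul_comm,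
      ← Real.cos_neg]
    ring_nf
  have him : ∀ t : ℝ, (Complex.exp (((-2 * Real.pi * t * ξ : ℝ) : ℂ) * Complex.I) •
      ((Real.exp (-|t| ^ α) : ℝ) : ℂ)).im = -(Real.exp (-|t| ^ α) * Real.sin (2 * Real.pi * ξ * t)) := by
    intro t
    rw [smul_eq_mul, Complex.im_mul_ofReal, Complex.exp_ofReal_mul_I_im, mul_comm,
      ← mul_neg, ← Real.sin_neg]
    ring_nf
  apply Complex.ext
  · have h1 := integral_re hi
    simp only [Complex.ofReal_re]
    simp only [RCLike.re_to_complex] at h1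
    rw [← h1]
    simp_rw [hre]
    have h2 := integral_comp_abs (f := fun t => Real.exp (-t ^ α) * Real.cos (2 * Real.pi * ξ * t))
    rw [ff_eq, ← h2]
    congr 1
    ext t
    rcases abs_choice t with h | h <;> rw [h] <;> simp
  · have h1 := integral_im hi
    simp only [Complex.ofReal_im]
    simp only [RCLike.im_to_complex] at h1
    rw [← h1]
    simp_rw [him]
    have h3 := integral_neg_eq_self (fun t : ℝ => -(Real.exp (-|t| ^ α) * Real.sin (2 * Real.pi * ξ * t))) volume
    simp only [abs_neg, mul_neg, Real.sin_neg, neg_neg] at h3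
    rw [integral_neg] at h3 ⊢
    linarith

open FourierTransform in
lemma inversion {α : ℝ} (hα : 0 < α) (hi : IntegrableOn (ff α) (Set.Ioi 0)) (θ : ℝ) :
    2 / Real.pi * ∫ x in Set.Ioi (0:ℝ), ff α x * Real.cos (θ * x) = Real.exp (-|θ| ^ α) := by
  have hF : 𝓕 (fun t : ℝ => ((Real.exp (-|t| ^ α) : ℝ) : ℂ)) =
      fun ξ => ((2 * ff α (2 * Real.pi * ξ) : ℝ) : ℂ) := funext (four_eq hα)
  have hI : Integrable (fun ξ => ((2 * ff α (2 * Real.pi * ξ) : ℝ) : ℂ)) := by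
    apply Integrable.ofReal
    apply Integrable.const_mul
    exact (integrable_of_even (ff_neg α) hi).comp_mul_left' (by positivity)
  have hc : Continuous (fun t : ℝ => ((Real.exp (-|t| ^ α) : ℝ) : ℂ)) :=
    Complex.continuous_ofReal.comp (g_cont hα)
  have hinv := congrFun (hc.fourierInv_fourier_eq (g_int hα).ofReal (by rw [hF]; exact hI)) θ
  rw [hF, Real.fourierInv_eq'] at hinv
  have hi2 : Integrable (fun v : ℝ => Complex.exp (((2 * Real.pi * inner ℝ v θ : ℝ) : ℂ) * Complex.I) •
      ((2 * ff α (2 * Real.pi * v) : ℝ) : ℂ)) := by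
    refine hI.norm.mono' ?_ (Eventually.of_forall fun t => ?_)
    · apply AEStronglyMeasurable.fun_smul _ hI.aestronglyMeasurable
      apply Continuous.aestronglyMeasurable
      fun_prop
    · rw [norm_smul, Complex.norm_exp_ofReal_mul_I, one_mul]
  have hre : ∀ v : ℝ, (Complex.exp (((2 * Real.pi * inner ℝ v θ : ℝ) : ℂ) * Complex.I) •
      ((2 * ff α (2 * Real.pi * v) : ℝ) : ℂ)).re =
      2 * (ff α (2 * Real.pi * v) * Real.cos (θ * (2 * Real.pi * v))) := by
    intro t
    rw [smul_eq_mul, Complex.re_mul_ofReal, Complex.exp_ofReal_mul_I_re]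
    simp only [RCLike.inner_apply, conj_trivial]
    ring_nf
  have h1 := integral_re hi2
  simp only [RCLike.re_to_complex] at h1
  rw [hinv, Complex.ofReal_re] at h1
  rw [← h1]
  simp_rw [hre]
  rw [integral_const_mul]
  have h4 : ∫ v : ℝ, ff α (2 * Real.pi * v) * Real.cos (θ * (2 * Real.pi * v)) =
      ∫ v : ℝ, (fun v => ff α (2 * Real.pi * v) * Real.cos (θ * (2 * Real.pi * v))) |v| := by
    congr 1
    ext v
    rcases abs_choice v with h | h
    · rw [h]
    · rw [h]; simp [ff_neg]
  rw [h4, integral_comp_abs (f := fun v => ff α (2 * Real.pi * v) * Real.cos (θ * (2 * Real.pi * v)))]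
  rw [integral_comp_mul_left_Ioi (fun x => ff α x * Real.cos (θ * x)) 0 (by positivity : 0 < 2 * Real.pi)]
  rw [mul_zero, smul_eq_mul]
  field_simp

lemma law_cos {α : ℝ} (hα : 0 < α) (μ : Measure ℝ) [IsProbabilityMeasure μ]
    (h0 : ∀ x < 0, cdf μ x = 0)
    (ht : ∀ x > 0, cdf μ x = 2 / Real.pi * TT α x) (θ : ℝ) :
    ∫ x, Real.cos (θ * x) ∂μ = Real.exp (-|θ| ^ α) := by
  have hpi := Real.pi_pos
  have hTc : Continuous (TT α) := continuous_iff_continuousAt.2 fun x => (TT_deriv hα x).continuousAt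
  have ht0 : cdf μ 0 = 2 / Real.pi * TT α 0 := by
    have h1 := ((cdf μ).right_continuous 0).mono_left (nhdsWithin_mono 0 Set.Ioi_subset_Ici_self)
    have h2 : Tendsto (fun x => 2 / Real.pi * TT α x) (𝓝[>] 0) (𝓝 (2 / Real.pi * TT α 0)) :=
      ((hTc.const_mul _).tendsto 0).mono_left nhdsWithin_le_nhds
    refine tendsto_nhds_unique h1 (h2.congr' ?_)
    filter_upwards [self_mem_nhdsWithin] with x hx
    exact (ht x hx).symm
  have hmono : MonotoneOn (TT α) (Set.Ioi 0) := by
    intro x hx y hy hxy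
    have := monotone_cdf μ hxy
    rw [ht x hx, ht y hy] at this
    exact le_of_mul_le_mul_left this (by positivity)
  have hpos : ∀ x ∈ Set.Ioi (0:ℝ), 0 ≤ ff α x := by
    intro x hx
    have := hmono.derivWithin_nonneg (x := x)
    rwa [derivWithin_of_isOpen isOpen_Ioi hx, (TT_deriv hα x).deriv] at this
  have hlim : Tendsto (TT α) atTop (𝓝 (Real.pi / 2)) := by
    have := (tendsto_cdf_atTop μ).const_mul (Real.pi / 2)
    rw [mul_one] at this
    refine this.congr' ?_
    filter_upwards [eventually_gt_atTop 0] with x hx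
    rw [ht x hx]; field_simp
  have hint : IntegrableOn (ff α) (Set.Ioi 0) :=
    integrableOn_Ioi_deriv_of_nonneg' (fun x _ => TT_deriv hα x) hpos hlim
  have hval : ∀ a, 0 ≤ a → ∫ x in Set.Ioi a, ff α x = Real.pi / 2 - TT α a := fun a ha =>
    integral_Ioi_of_hasDerivAt_of_nonneg' (fun x _ => TT_deriv hα x)
      (fun x hx => hpos x (lt_of_le_of_lt ha hx)) hlim
  let d : ℝ → ENNReal := fun x => ENNReal.ofReal (2 / Real.pi * ff α x)
  have hffm : Measurable (ff α) := by
    have : ff α = deriv (TT α) := by ext x; exact (TT_deriv hα x).deriv.symm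
    rw [this]; exact measurable_deriv _
  have hdm : Measurable d := (hffm.const_mul _).ennreal_ofReal
  let ν : Measure ℝ := (volume.restrict (Set.Ioi 0)).withDensity d
  have hνI : ∀ a, 0 ≤ a → ν (Set.Ioi a) = ENNReal.ofReal (1 - 2 / Real.pi * TT α a) := by
    intro a ha
    rw [withDensity_apply _ measurableSet_Ioi, Measure.restrict_restrict measurableSet_Ioi,
      Set.inter_eq_left.2 (Set.Ioi_subset_Ioi ha),
      ← ofReal_integral_eq_lintegral_ofReal, integral_const_mul, hval a ha]
    · congr 1; field_simp
    · exact (hint.mono_set (Set.Ioi_subset_Ioi ha)).const_mul _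
    · filter_upwards [ae_restrict_mem measurableSet_Ioi] with x hx
      exact mul_nonneg (by positivity) (hpos x (lt_of_le_of_lt ha hx))
  have hν0 : ν (Set.Iic 0) = 0 := by
    rw [withDensity_apply _ measurableSet_Iic, Measure.restrict_restrict measurableSet_Iic,
      Set.Iic_inter_Ioi, Set.Ioc_self, Measure.restrict_empty, lintegral_zero_measure]
  have hνp : IsProbabilityMeasure ν := by
    constructor
    rw [← Set.Iic_union_Ioi (a := (0:ℝ)), measure_union (Set.Iic_disjoint_Ioi le_rfl) measurableSet_Ioi, hν0,
      hνI 0 le_rfl, TT_zero]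
    simp
  have hμν : μ = ν := by
    apply Measure.eq_of_cdf
    ext x
    rw [cdf_eq_real ν]
    rcases lt_or_ge x 0 with hx | hx
    · rw [h0 x hx, measureReal_def, measure_mono_null (Set.Iic_subset_Iic.2 hx.le) hν0]
      simp
    · have h1 : cdf μ x = 2 / Real.pi * TT α x := by
        rcases hx.eq_or_lt with h | h
        · rw [← h]; exact ht0
        · exact ht x h
      have h2 : ν.real (Set.Iic x) = 1 - ν.real (Set.Ioi x) := by
        rw [← Set.compl_Ioi, probReal_compl_eq_one_sub measurableSet_Ioi]
      rw [h2, measureReal_def, hνI x hx, ENNReal.toReal_ofReal, h1]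
      · ring
      · rw [← h1]; linarith [cdf_le_one μ x]
  rw [hμν, integral_withDensity_eq_integral_toReal_smul hdm (Eventually.of_forall fun x => by simp [d]),
    ← inversion hα hint, ← integral_const_mul]
  refine setIntegral_congr_fun measurableSet_Ioi fun x hx => ?_
  simp only [d, smul_eq_mul]
  rw [ENNReal.toReal_ofReal (mul_nonneg (by positivity) (hpos x hx))]
  ring
/-- the Chambers-Mallows-Stuck map -/
noncomputable def YY (α : ℝ) (p : ℝ × ℝ) : ℝ :=
  Real.sin (α * p.1) / (Real.cos p.1) ^ ((1 : ℝ) / α) *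
    (Real.cos (p.1 - α * p.1) / p.2) ^ ((1 - α) / α)

/-- uniform law on `(-π/2, π/2)` -/
noncomputable def uM : Measure ℝ :=
  ENNReal.ofReal (1 / Real.pi) • volume.restrict (Set.Ioo (-(Real.pi / 2)) (Real.pi / 2))

instance uM_prob : IsProbabilityMeasure uM := by
  constructor
  have hpi := Real.pi_pos
  simp only [uM, Measure.smul_apply, Measure.restrict_apply_univ, Real.volume_Ioo, smul_eq_mul]
  rw [← ENNReal.ofReal_mul (by positivity), ENNReal.ofReal_eq_one]
  field_simp
  ring

instance expM_prob : IsProbabilityMeasure (expMeasure 1) :=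
  isProbabilityMeasure_expMeasure one_pos

instance expM_noAtoms : NullSingletonClass (expMeasure 1) := by
  constructor
  intro x
  have : expMeasure 1 ≪ volume := by
    unfold expMeasure gammaMeasure
    exact withDensity_absolutelyContinuous _ _
  exact this (by simp)

lemma expM_Iic {v : ℝ} (hv : 0 ≤ v) : (expMeasure 1).real (Set.Iic v) = 1 - Real.exp (-v) := by
  rw [← cdf_eq_real, cdf_expMeasure_eq one_pos, if_pos hv, one_mul]

lemma expM_Ici {v : ℝ} (hv : 0 ≤ v) : (expMeasure 1).real (Set.Ici v) = Real.exp (-v) := by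
  rw [← Set.compl_Iio, probReal_compl_eq_one_sub measurableSet_Iio,
    measureReal_congr (Iio_ae_eq_Iic), expM_Iic hv]
  ring

lemma expM_pos : ∀ᵐ w ∂(expMeasure 1), 0 < w := by
  rw [ae_iff]
  have h := expM_Iic (v := 0) le_rfl
  simp only [neg_zero, Real.exp_zero, sub_self] at h
  simp only [not_lt]
  exact (measureReal_eq_zero_iff).1 h

lemma uM_mem : ∀ᵐ u ∂uM, u ∈ Set.Ioo (-(Real.pi / 2)) (Real.pi / 2) :=
  Measure.ae_smul_measure (ae_restrict_mem measurableSet_Ioo) _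

lemma M_mem : ∀ᵐ p ∂(uM.prod (expMeasure 1)),
    p.1 ∈ Set.Ioo (-(Real.pi / 2)) (Real.pi / 2) ∧ 0 < p.2 :=
  (Measure.quasiMeasurePreserving_fst.ae uM_mem).and
    (Measure.quasiMeasurePreserving_snd.ae expM_pos)

lemma YY_meas (α : ℝ) : Measurable (YY α) := by
  unfold YY; fun_prop

lemma YY_neg (α u w : ℝ) : YY α (-u, w) = -YY α (u, w) := by
  unfold YY
  simp only [mul_neg, Real.sin_neg, Real.cos_neg]
  rw [show -u - -(α * u) = -(u - α * u) by ring, Real.cos_neg]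
  ring

lemma uM_neg : MeasurePreserving (fun u : ℝ => -u) uM uM := by
  refine ⟨measurable_neg, ?_⟩
  unfold uM
  rw [Measure.map_smul]
  congr 1
  have h := (Measure.measurePreserving_neg (volume : Measure ℝ)).restrict_preimage
    (measurableSet_Ioo (a := -(Real.pi / 2)) (b := Real.pi / 2))
  simpa using h.map_eq

lemma M_neg : MeasurePreserving (fun p : ℝ × ℝ => (-p.1, p.2)) (uM.prod (expMeasure 1))
    (uM.prod (expMeasure 1)) :=
  uM_neg.prod (MeasurePreserving.id _)

lemma log_YY {α x u w : ℝ} (hα : 0 < α) (hα2 : α < 2) (hα1 : α ≠ 1)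
    (h0 : 0 < u) (h1 : u < Real.pi / 2) (hw : 0 < w) :
    0 < YY α (u, w) ∧ Real.log (YY α (u, w)) - Real.log x =
      (α - 1) / α * (Real.log w - Real.log (VV α x u)) := by
  obtain ⟨hc, hs, h3⟩ := trig_pos hα hα2 h0 h1
  have hne : α - 1 ≠ 0 := sub_ne_zero.2 hα1
  have h4 : Real.cos (u - α * u) = Real.cos ((1 - α) * u) := by ring_nf
  unfold YY
  simp only [h4]
  constructor
  · positivity
  · rw [Real.log_mul (by positivity) (by positivity), Real.log_div (by positivity) (by positivity),
      Real.log_rpow hc, Real.log_rpow (by positivity), Real.log_div h3.ne' hw.ne']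
    unfold VV
    rw [Real.log_div (by positivity) hc.ne', Real.log_mul (by positivity) h3.ne', Real.log_exp]
    unfold sc
    field_simp
    ring

/-- conditional cdf of `|YY|` given `u` -/
noncomputable def kk (α x u : ℝ) : ℝ := (expMeasure 1).real {w | |YY α (u, w)| ≤ x}

lemma kk_neg (α x u : ℝ) : kk α x (-u) = kk α x u := by
  simp [kk, YY_neg]

lemma kk_gt {α x u : ℝ} (hα1 : 1 < α) (hα2 : α < 2) (hx : 0 < x)
    (h0 : 0 < u) (h1 : u < Real.pi / 2) : kk α x u = 1 - Real.exp (-VV α x u) := by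
  have hV := VV_pos (x := x) (by linarith) hα2 h0 h1
  rw [← expM_Iic hV.le]
  apply measureReal_congr
  filter_upwards [expM_pos] with w hw
  obtain ⟨hp, hl⟩ := log_YY (x := x) (by linarith) hα2 hα1.ne' h0 h1 hw
  apply propext
  change |YY α (u, w)| ≤ x ↔ w ≤ VV α x u
  have hq : 0 < (α - 1) / α := div_pos (by linarith) (by linarith)
  rw [abs_of_pos hp, ← Real.log_le_log_iff hp hx, ← Real.log_le_log_iff hw hV]
  constructor <;> intro h <;> nlinarith

lemma kk_lt {α x u : ℝ} (hα : 0 < α) (hα1 : α < 1) (hx : 0 < x)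
    (h0 : 0 < u) (h1 : u < Real.pi / 2) : kk α x u = Real.exp (-VV α x u) := by
  have hV := VV_pos (x := x) hα (by linarith) h0 h1
  rw [← expM_Ici hV.le]
  apply measureReal_congr
  filter_upwards [expM_pos] with w hw
  obtain ⟨hp, hl⟩ := log_YY (x := x) hα (by linarith) hα1.ne h0 h1 hw
  apply propext
  change |YY α (u, w)| ≤ x ↔ VV α x u ≤ w
  have hq : (α - 1) / α < 0 := div_neg_of_neg_of_pos (by linarith) (by linarith)
  rw [abs_of_pos hp, ← Real.log_le_log_iff hp hx, ← Real.log_le_log_iff hV hw]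
  constructor <;> intro h <;> nlinarith

lemma kk_int {α x : ℝ} (hα : 0 < α) (hα2 : α < 2) (hα1 : α ≠ 1) (hx : 0 < x) :
    ∫ u in Set.Ioo 0 (Real.pi / 2), kk α x u = TT α x := by
  rcases lt_or_gt_of_ne hα1 with h | h
  · rw [← key_lt hα h hx]
    exact setIntegral_congr_fun measurableSet_Ioo fun u hu => kk_lt hα h hx hu.1 hu.2
  · rw [setIntegral_congr_fun measurableSet_Ioo (fun u hu => kk_gt h hα2 hx hu.1 hu.2),
      integral_sub (by simp) (eV_int hα hα2), key_gt h hα2 hx]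
    simp [max_eq_left (div_pos Real.pi_pos two_pos).le]

lemma even_Ioo {f : ℝ → ℝ} (hf : ∀ x, f (-x) = f x) (a : ℝ) :
    ∫ u in Set.Ioo (-a) a, f u = 2 * ∫ u in Set.Ioo 0 a, f u := by
  have h := integral_comp_abs (f := (Set.Iio a).indicator f)
  rw [setIntegral_indicator measurableSet_Iio, Set.Ioi_inter_Iio] at h
  rw [← h, ← integral_indicator measurableSet_Ioo]
  congr 1
  ext u
  have : f |u| = f u := by
    rcases abs_choice u with h | h <;> rw [h]
    exact hf u
  simp only [Set.indicator, Set.mem_Ioo, Set.mem_Iio, ← abs_lt, this]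

lemma cdf_YY {α x : ℝ} (hα : 0 < α) (hα2 : α < 2) (hα1 : α ≠ 1) (hx : 0 < x) :
    ((uM.prod (expMeasure 1)).map (fun p => |YY α p|)).real (Set.Iic x) =
      2 / Real.pi * TT α x := by
  have hm : Measurable (fun p => |YY α p|) := (YY_meas α).abs
  rw [map_measureReal_apply hm measurableSet_Iic, measureReal_def,
    Measure.prod_apply (hm measurableSet_Iic), ← integral_toReal]
  · have : ∀ u, (expMeasure 1 (Prod.mk u ⁻¹' ((fun p => |YY α p|) ⁻¹' Set.Iic x))).toReal = kk α x u :=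
      fun u => rfl
    simp_rw [this]
    unfold uM
    rw [integral_smul_measure, even_Ioo (kk_neg α x), kk_int hα hα2 hα1 hx,
      ENNReal.toReal_ofReal (by have := Real.pi_pos; positivity), smul_eq_mul]
    ring
  · exact (measurable_measure_prodMk_left (hm measurableSet_Iic)).aemeasurable
  · exact Eventually.of_forall fun u => measure_lt_top _ _

lemma cos_YY {α : ℝ} (hα : 0 < α) (hα2 : α < 2) (hα1 : α ≠ 1) (θ : ℝ) :
    ∫ p, Real.cos (θ * YY α p) ∂(uM.prod (expMeasure 1)) = Real.exp (-|θ| ^ α) := by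
  have hm : Measurable (fun p => |YY α p|) := (YY_meas α).abs
  have : IsProbabilityMeasure ((uM.prod (expMeasure 1)).map (fun p => |YY α p|)) :=
    Measure.isProbabilityMeasure_map hm.aemeasurable
  rw [← law_cos hα ((uM.prod (expMeasure 1)).map (fun p => |YY α p|)) ?_ ?_ θ]
  · rw [integral_map hm.aemeasurable (by fun_prop)]
    congr 1
    ext p
    rcases abs_choice (YY α p) with h | h <;> rw [h]
    rw [mul_neg, Real.cos_neg]
  · intro x hx
    rw [cdf_eq_real, map_measureReal_apply hm measurableSet_Iic]
    have : (fun p => |YY α p|) ⁻¹' Set.Iic x = ∅ := by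
      ext p
      simp only [Set.mem_preimage, Set.mem_Iic, Set.mem_empty_iff_false, iff_false, not_le]
      exact hx.trans_le (abs_nonneg _)
    rw [this]; simp
  · intro x hx
    rw [cdf_eq_real, cdf_YY hα hα2 hα1 hx]

lemma sin_YY (α θ : ℝ) :
    ∫ p, Real.sin (θ * YY α p) ∂(uM.prod (expMeasure 1)) = 0 := by
  have hm : Measurable (fun p => Real.sin (θ * YY α p)) := by
    have := YY_meas α
    fun_prop
  have h := integral_map (μ := uM.prod (expMeasure 1)) M_neg.measurable.aemeasurable
    (f := fun p => Real.sin (θ * YY α p)) hm.aestronglyMeasurable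
  rw [M_neg.map_eq] at h
  have h2 : ∀ p : ℝ × ℝ, Real.sin (θ * YY α (-p.1, p.2)) = - Real.sin (θ * YY α p) := by
    intro p
    rw [YY_neg, mul_neg, Real.sin_neg]
  simp_rw [h2, integral_neg] at h
  linarith

lemma cf_YY_lt {α : ℝ} (hα : 0 < α) (hα2 : α < 2) (hα1 : α ≠ 1) (θ : ℝ) :
    ∫ p, Complex.exp (Complex.I * θ * YY α p) ∂(uM.prod (expMeasure 1)) =
      Complex.exp (((-|θ| ^ α : ℝ) : ℂ)) := by
  have hm := YY_meas α
  have he : ∀ p, Complex.exp (Complex.I * θ * YY α p) =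
      ((Real.cos (θ * YY α p) : ℝ) : ℂ) + ((Real.sin (θ * YY α p) : ℝ) : ℂ) * Complex.I := by
    intro p
    rw [show Complex.I * θ * YY α p = ((θ * YY α p : ℝ) : ℂ) * Complex.I by push_cast; ring,
      Complex.exp_mul_I]
    push_cast
    rfl
  have i1 : Integrable (fun p => Real.cos (θ * YY α p)) (uM.prod (expMeasure 1)) :=
    (integrable_const (1:ℝ)).mono' (by fun_prop)
      (Eventually.of_forall fun p => Real.abs_cos_le_one _)
  have i2 : Integrable (fun p => Real.sin (θ * YY α p)) (uM.prod (expMeasure 1)) :=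
    (integrable_const (1:ℝ)).mono' (by fun_prop)
      (Eventually.of_forall fun p => Real.abs_sin_le_one _)
  simp_rw [he]
  rw [integral_add i1.ofReal (i2.ofReal.mul_const _), integral_mul_const, integral_complex_ofReal,
    integral_complex_ofReal, cos_YY hα hα2 hα1, sin_YY]
  simp

lemma YY_cont2 {u w : ℝ} (hu : u ∈ Set.Ioo (-(Real.pi / 2)) (Real.pi / 2)) (hw : 0 < w) :
    ContinuousAt (fun α => YY α (u, w)) 2 := by
  have hc := Real.cos_pos_of_mem_Ioo hu
  have h2 : Real.cos (u - 2 * u) = Real.cos u := by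
    rw [show u - 2 * u = -u by ring, Real.cos_neg]
  unfold YY
  refine ContinuousAt.mul (ContinuousAt.div (by fun_prop) (ContinuousAt.rpow continuousAt_const
    (ContinuousAt.div continuousAt_const continuousAt_id (by norm_num)) (Or.inl hc.ne'))
    (Real.rpow_pos_of_pos hc _).ne') (ContinuousAt.rpow (by fun_prop)
    (ContinuousAt.div (by fun_prop) continuousAt_id (by norm_num)) (Or.inl ?_))
  simp only [h2]
  positivity

lemma cf_YY_two (θ : ℝ) :
    ∫ p, Complex.exp (Complex.I * θ * YY 2 p) ∂(uM.prod (expMeasure 1)) =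
      Complex.exp (((-|θ| ^ (2:ℝ) : ℝ) : ℂ)) := by
  have h1 : Tendsto (fun α : ℝ => ∫ p, Complex.exp (Complex.I * θ * YY α p) ∂(uM.prod (expMeasure 1)))
      (𝓝[<] 2) (𝓝 (∫ p, Complex.exp (Complex.I * θ * YY 2 p) ∂(uM.prod (expMeasure 1)))) := by
    refine tendsto_integral_filter_of_dominated_convergence (fun _ => (1:ℝ))
      (Eventually.of_forall fun α => ?_) (Eventually.of_forall fun α =>
        Eventually.of_forall fun p => ?_) (integrable_const _) ?_
    · have := YY_meas α
      apply Measurable.aestronglyMeasurable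
      fun_prop
    · rw [show Complex.I * θ * YY α p = ((θ * YY α p : ℝ) : ℂ) * Complex.I by push_cast; ring,
        Complex.norm_exp_ofReal_mul_I]
    · filter_upwards [M_mem] with p hp
      have h := YY_cont2 hp.1 hp.2
      have h' : ContinuousAt (fun α => Complex.exp (Complex.I * θ * YY α p)) 2 :=
        Complex.continuous_exp.continuousAt.comp
          (continuousAt_const.mul (Complex.continuous_ofReal.continuousAt.comp h))
      exact h'.tendsto.mono_left nhdsWithin_le_nhds
  have h2 : Tendsto (fun α : ℝ => Complex.exp (((-|θ| ^ α : ℝ) : ℂ))) (𝓝[<] 2)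
      (𝓝 (Complex.exp (((-|θ| ^ (2:ℝ) : ℝ) : ℂ)))) := by
    have : ContinuousAt (fun α : ℝ => |θ| ^ α) 2 :=
      ContinuousAt.rpow continuousAt_const continuousAt_id (Or.inr (by norm_num))
    have h' : ContinuousAt (fun α : ℝ => Complex.exp (((-|θ| ^ α : ℝ) : ℂ))) 2 :=
      Complex.continuous_exp.continuousAt.comp (Complex.continuous_ofReal.continuousAt.comp this.neg)
    exact h'.tendsto.mono_left nhdsWithin_le_nhds
  refine tendsto_nhds_unique h1 (h2.congr' ?_)
  have : Set.Ioo (1:ℝ) 2 ∈ 𝓝[<] (2:ℝ) := Ioo_mem_nhdsLT (by norm_num)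
  filter_upwards [this] with α hα
  rw [cf_YY_lt (by linarith [hα.1]) hα.2 hα.1.ne']

theorem stmt_10 {Ω : Type*} [MeasurableSpace Ω] (P : Measure Ω) [IsProbabilityMeasure P]
    (α : ℝ) (hα : 0 < α) (hα2 : α ≤ 2) (hα1 : α ≠ 1)
    (U W : Ω → ℝ) (hU : Measurable U) (hW : Measurable W)
    (hindep : IndepFun U W P)
    (hUlaw : P.map U =
      ENNReal.ofReal (1 / Real.pi) •
        volume.restrict (Set.Ioo (-(Real.pi / 2)) (Real.pi / 2)))
    (hWlaw : P.map W = expMeasure 1)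
    (X : Ω → ℝ)
    (hX : ∀ ω, X ω =
      Real.sin (α * U ω) / (Real.cos (U ω)) ^ ((1 : ℝ) / α) *
        (Real.cos (U ω - α * U ω) / W ω) ^ ((1 - α) / α)) :
    ∀ θ : ℝ, cf (P.map X) θ = Complex.exp (((-|θ| ^ α : ℝ) : ℂ)) := by
  intro θ
  have hXe : X = fun ω => YY α (U ω, W ω) := by
    ext ω
    rw [hX ω]
    rfl
  have hprod : P.map (fun ω => (U ω, W ω)) = uM.prod (expMeasure 1) := by
    rw [(indepFun_iff_map_prod_eq_prod_map_map hU.aemeasurable hW.aemeasurable).1 hindep,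
      hUlaw, hWlaw]
    rfl
  have hXm : P.map X = (uM.prod (expMeasure 1)).map (YY α) := by
    rw [← hprod, Measure.map_map (YY_meas α) (hU.prodMk hW), hXe]
    rfl
  have hcf : cf (P.map X) θ =
      ∫ p, Complex.exp (Complex.I * θ * YY α p) ∂(uM.prod (expMeasure 1)) := by
    unfold cf
    rw [hXm, integral_map (YY_meas α).aemeasurable]
    apply Measurable.aestronglyMeasurable
    fun_prop
  rw [hcf]
  rcases hα2.eq_or_lt with h | h
  · rw [h]
    exact cf_YY_two θ
  · exact cf_YY_lt hα h hα1 θ
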